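/- In the tied braid monoid TB_n^B of type B, for every pair i, k with 1 ≤ i < k ≤ n and k − i > 1, and for every choice of elements s_l ∈ {σ_l, σ_l^{-1}} for l = i, i+1, …, k−2, one has η_{i,k} = s_i s_{i+1} ⋯ s_{k−2} η_{k−1} s_{k−2}^{-1} ⋯ s_{i+1}^{-1} s_i^{-1}; that is, all 2^{k−i−1} such expressions are equal to the generalized tie η_{i,k}. -/

import Mathlib

/-! The tied braid monoid of type B, `TBₙᴮ`, presented by generators and relations. -/

/-- Generators of the tied braid monoid of type B on `n` (moving) strands:
`sig i` is `σ_{i+1}`, `sigInv i` is `σ_{i+1}⁻¹`, `rho` is `ρ₁`, `rhoInv` is `ρ₁⁻¹`,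
`phi` is `φ₁` and `eta i` is `η_{i+1}` (for `i : Fin (n-1)`). -/
inductive TBGen (n : ℕ) : Type
  | sig : Fin (n - 1) → TBGen n
  | sigInv : Fin (n - 1) → TBGen n
  | rho : TBGen n
  | rhoInv : TBGen n
  | phi : TBGen n
  | eta : Fin (n - 1) → TBGen n

namespace TiedBraidB

variable (n : ℕ)

/-- The word `σᵢ` (for `1 ≤ i ≤ n-1`; junk value `1` otherwise). -/
def wσ (i : ℕ) : FreeMonoid (TBGen n) :=
  if h : 1 ≤ i ∧ i ≤ n - 1 then FreeMonoid.of (TBGen.sig ⟨i - 1, by omega⟩) else 1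

/-- The word `σᵢ⁻¹`. -/
def wσi (i : ℕ) : FreeMonoid (TBGen n) :=
  if h : 1 ≤ i ∧ i ≤ n - 1 then FreeMonoid.of (TBGen.sigInv ⟨i - 1, by omega⟩) else 1

/-- The word `ηᵢ`. -/
def wη (i : ℕ) : FreeMonoid (TBGen n) :=
  if h : 1 ≤ i ∧ i ≤ n - 1 then FreeMonoid.of (TBGen.eta ⟨i - 1, by omega⟩) else 1

/-- The word `ρ₁`. -/
def wρ : FreeMonoid (TBGen n) := FreeMonoid.of TBGen.rho

/-- The word `ρ₁⁻¹`. -/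
def wρi : FreeMonoid (TBGen n) := FreeMonoid.of TBGen.rhoInv

/-- The word `φ₁`. -/
def wφ : FreeMonoid (TBGen n) := FreeMonoid.of TBGen.phi

/-- The descending word `σₖ σₖ₋₁ ⋯ σ₁`. -/
def wσDesc : ℕ → FreeMonoid (TBGen n)
  | 0 => 1
  | k + 1 => wσ n (k + 1) * wσDesc k

/-- The ascending word `σ₁ σ₂ ⋯ σₖ`. -/
def wσAsc : ℕ → FreeMonoid (TBGen n)
  | 0 => 1
  | k + 1 => wσAsc k * wσ n (k + 1)

/-- The descending word `σₖ⁻¹ σₖ₋₁⁻¹ ⋯ σ₁⁻¹`. -/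
def wσiDesc : ℕ → FreeMonoid (TBGen n)
  | 0 => 1
  | k + 1 => wσi n (k + 1) * wσiDesc k

/-- The ascending word `σ₁⁻¹ σ₂⁻¹ ⋯ σₖ⁻¹`. -/
def wσiAsc : ℕ → FreeMonoid (TBGen n)
  | 0 => 1
  | k + 1 => wσiAsc k * wσi n (k + 1)

/-- The defining relations of the tied braid monoid `TBₙᴮ` of type B. -/
inductive tbRel : FreeMonoid (TBGen n) → FreeMonoid (TBGen n) → Prop
  | sig_inv (i : ℕ) (h1 : 1 ≤ i) (h2 : i ≤ n - 1) :
      tbRel (wσ n i * wσi n i) 1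
  | inv_sig (i : ℕ) (h1 : 1 ≤ i) (h2 : i ≤ n - 1) :
      tbRel (wσi n i * wσ n i) 1
  | rho_inv : tbRel (wρ n * wρi n) 1
  | inv_rho : tbRel (wρi n * wρ n) 1
  | sig_comm (i j : ℕ) (h1 : 1 ≤ i) (h2 : i + 1 < j) (h3 : j ≤ n - 1) :
      tbRel (wσ n i * wσ n j) (wσ n j * wσ n i)
  | sig_braid (i : ℕ) (h1 : 1 ≤ i) (h2 : i + 1 ≤ n - 1) :
      tbRel (wσ n i * wσ n (i + 1) * wσ n i) (wσ n (i + 1) * wσ n i * wσ n (i + 1))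
  | rho_sig (i : ℕ) (h1 : 2 ≤ i) (h2 : i ≤ n - 1) :
      tbRel (wρ n * wσ n i) (wσ n i * wρ n)
  | rho_sig_rho_sig (h : 2 ≤ n) :
      tbRel (wρ n * wσ n 1 * wρ n * wσ n 1) (wσ n 1 * wρ n * wσ n 1 * wρ n)
  | eta_comm (i j : ℕ) (h1 : 1 ≤ i) (h2 : i ≤ n - 1) (h3 : 1 ≤ j) (h4 : j ≤ n - 1) :
      tbRel (wη n i * wη n j) (wη n j * wη n i)
  | eta_sig (i : ℕ) (h1 : 1 ≤ i) (h2 : i ≤ n - 1) :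
      tbRel (wη n i * wσ n i) (wσ n i * wη n i)
  | eta_sig_far (i j : ℕ) (h1 : 1 ≤ i) (h2 : i ≤ n - 1) (h3 : 1 ≤ j) (h4 : j ≤ n - 1)
      (h5 : i + 1 < j ∨ j + 1 < i) :
      tbRel (wη n i * wσ n j) (wσ n j * wη n i)
  | eta_sig_sig (i j : ℕ) (h1 : 1 ≤ i) (h2 : i ≤ n - 1) (h3 : 1 ≤ j) (h4 : j ≤ n - 1)
      (h5 : j = i + 1 ∨ i = j + 1) :
      tbRel (wη n i * wσ n j * wσ n i) (wσ n j * wσ n i * wη n j)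
  | eta_sig_sigInv (i j : ℕ) (h1 : 1 ≤ i) (h2 : i ≤ n - 1) (h3 : 1 ≤ j) (h4 : j ≤ n - 1)
      (h5 : j = i + 1 ∨ i = j + 1) :
      tbRel (wη n i * wσ n j * wσi n i) (wσ n j * wσi n i * wη n j)
  | eta_eta_sig (i j : ℕ) (h1 : 1 ≤ i) (h2 : i ≤ n - 1) (h3 : 1 ≤ j) (h4 : j ≤ n - 1)
      (h5 : j = i + 1 ∨ i = j + 1) :
      tbRel (wη n i * wη n j * wσ n i) (wσ n i * wη n i * wη n j)
  | eta_eta_sig' (i j : ℕ) (h1 : 1 ≤ i) (h2 : i ≤ n - 1) (h3 : 1 ≤ j) (h4 : j ≤ n - 1)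
      (h5 : j = i + 1 ∨ i = j + 1) :
      tbRel (wη n i * wη n j * wσ n i) (wη n j * wσ n i * wη n j)
  | eta_idem (i : ℕ) (h1 : 1 ≤ i) (h2 : i ≤ n - 1) :
      tbRel (wη n i * wη n i) (wη n i)
  | phi_idem : tbRel (wφ n * wφ n) (wφ n)
  | rho_eta (i : ℕ) (h1 : 1 ≤ i) (h2 : i ≤ n - 1) :
      tbRel (wρ n * wη n i) (wη n i * wρ n)
  | rho_phi : tbRel (wρ n * wφ n) (wφ n * wρ n)
  | phi_eta (i : ℕ) (h1 : 1 ≤ i) (h2 : i ≤ n - 1) :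
      tbRel (wφ n * wη n i) (wη n i * wφ n)
  | phi_sig (i : ℕ) (h1 : 2 ≤ i) (h2 : i ≤ n - 1) :
      tbRel (wφ n * wσ n i) (wσ n i * wφ n)
  | phi_move (i : ℕ) (h1 : 2 ≤ i) (h2 : i ≤ n) :
      tbRel (wσDesc n (i - 1) * wφ n * wσiAsc n (i - 1))
        (wσiDesc n (i - 1) * wφ n * wσAsc n (i - 1))
  | phi_eta_one (h : 2 ≤ n) :
      tbRel (wφ n * wη n 1) (wφ n * wσ n 1 * wφ n * wσi n 1)
  | phi_eta_one' (h : 2 ≤ n) :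
      tbRel (wφ n * wσ n 1 * wφ n * wσi n 1) (wσ n 1 * wφ n * wσi n 1 * wη n 1)

/-- The tied braid monoid of type B on `n` strands. -/
def TB : Type := (conGen (tbRel n)).Quotient

instance : Monoid (TB n) := inferInstanceAs (Monoid (conGen (tbRel n)).Quotient)

/-- The canonical projection from the free monoid on the generators onto `TBₙᴮ`. -/
def mk : FreeMonoid (TBGen n) →* TB n := Con.mk' _

/-- The generator `σᵢ` of `TBₙᴮ`. -/
def σB (i : ℕ) : TB n := mk n (wσ n i)

/-- The generator `σᵢ⁻¹` of `TBₙᴮ`. -/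
def σiB (i : ℕ) : TB n := mk n (wσi n i)

/-- The generator `ρ₁` of `TBₙᴮ`. -/
def ρB : TB n := mk n (wρ n)

/-- The generator `ρ₁⁻¹` of `TBₙᴮ`. -/
def ρiB : TB n := mk n (wρi n)

/-- The generator `φ₁` of `TBₙᴮ`. -/
def φB : TB n := mk n (wφ n)

/-- The generator `ηᵢ` of `TBₙᴮ`. -/
def ηB (i : ℕ) : TB n := mk n (wη n i)

/-- The word `σᵢ σᵢ₊₁ ⋯ σₖ` (empty if `k < i`). -/
def wσRange (i k : ℕ) : FreeMonoid (TBGen n) :=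
  ((List.range' i (k + 1 - i)).map (wσ n)).prod

/-- The word `σₖ⁻¹ σₖ₋₁⁻¹ ⋯ σᵢ⁻¹` (empty if `k < i`). -/
def wσiRangeRev (i k : ℕ) : FreeMonoid (TBGen n) :=
  ((List.range' i (k + 1 - i)).reverse.map (wσi n)).prod

/-- The word representing the generalized tie `η_{i,j}`:
`σᵢ ⋯ σ_{j-2} η_{j-1} σ_{j-2}⁻¹ ⋯ σᵢ⁻¹` for `i < j`, with the conventions
`η_{i,i} = 1` and `η_{j,i} = η_{i,j}`. -/
def wηg (i j : ℕ) : FreeMonoid (TBGen n) :=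
  if i = j then 1
  else wσRange n (min i j) (max i j - 2) * wη n (max i j - 1) *
    wσiRangeRev n (min i j) (max i j - 2)

/-- The word representing the generalized tie `φⱼ = σ_{j-1} ⋯ σ₁ φ₁ σ₁⁻¹ ⋯ σ_{j-1}⁻¹`. -/
def wφg (j : ℕ) : FreeMonoid (TBGen n) :=
  wσDesc n (j - 1) * wφ n * wσiAsc n (j - 1)

/-- The generalized tie `η_{i,j}` joining the `i`-th and `j`-th moving strands. -/
def ηg (i j : ℕ) : TB n := mk n (wηg n i j)

/-- The generalized tie `φⱼ` joining the fixed strand and the `j`-th moving strand. -/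
def φg (j : ℕ) : TB n := mk n (wφg n j)

end TiedBraidB

/-!
Let the units of `TBₙᴮ` act on it by conjugation. The mixed relations say that
`σᵢ • ηᵢ₊₁` and `σᵢ⁻¹ • ηᵢ₊₁` are both equal to `σᵢ₊₁⁻¹ • ηᵢ`. Hence, in `(sᵢ ⋯ s_{k-2}) • η_{k-1}`,
the last factor can be traded for `σ_{k-1}⁻¹`, which commutes with all the remaining factors and
moves to the front. Repeating this gives `(σ_{k-1}⁻¹ ⋯ σᵢ₊₁⁻¹) • ηᵢ`, in which the signs
no longer occur.
-/

namespace TiedBraidB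

open ConjAct

section MulAction

variable {G X : Type*} [Monoid G] [MulAction G X]

theorem prod_map_range'_smul_of_commute {s t : ℕ → G} {x : ℕ → X} {i m : ℕ}
    (commute : ∀ l j, l + 1 < j → Commute (s l) (t j))
    (exchange : ∀ l, i ≤ l → l < i + m → s l • x (l + 1) = t (l + 1) • x l) :
    ((List.range' i m).map s).prod • x (i + m) =
      ((List.range' (i + 1) m).reverse.map t).prod • x i := by
  induction m with
  | zero => rfl
  | succ m ih =>
    have commute_prod : Commute ((List.range' i m).map s).prod (t (i + m + 1)) := by
      refine Commute.list_prod_left _ _ fun g hg => ?_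
      obtain ⟨l, hl, rfl⟩ := List.mem_map.1 hg
      have := List.mem_range'_1.1 hl
      exact commute l _ (by omega)
    calc ((List.range' i (m + 1)).map s).prod • x (i + (m + 1))
        = ((List.range' i m).map s).prod • s (i + m) • x (i + m + 1) := by
          simp only [List.range'_1_concat, List.map_append, List.prod_append, List.map_cons,
            List.map_nil, List.prod_singleton, mul_smul, add_assoc]
      _ = ((List.range' i m).map s).prod • t (i + m + 1) • x (i + m) := by
          rw [exchange (i + m) (by omega) (by omega)]
      _ = t (i + m + 1) • ((List.range' i m).map s).prod • x (i + m) := by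
          rw [smul_smul, commute_prod.eq, mul_smul]
      _ = t (i + m + 1) • ((List.range' (i + 1) m).reverse.map t).prod • x i := by
          rw [ih fun l hil hlm => exchange l hil (by omega)]
      _ = ((List.range' (i + 1) (m + 1)).reverse.map t).prod • x i := by
          simp only [List.range'_1_concat, List.reverse_append, List.reverse_singleton,
            List.singleton_append, List.map_cons, List.prod_cons, mul_smul, add_right_comm]

end MulAction

section ConjAct

variable {M : Type*} [Monoid M]

theorem toConjAct_smul_eq_iff_semiconjBy {u : Mˣ} {x y : M} :
    toConjAct u • x = y ↔ SemiconjBy (u : M) x y := by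
  rw [units_smul_def, ofConjAct_toConjAct, Units.mul_inv_eq_iff_eq_mul, SemiconjBy]

theorem prod_map_toConjAct_smul {ι : Type*} (u : ι → Mˣ) (L : List ι) (x : M) :
    (L.map fun l => toConjAct (u l)).prod • x =
      (L.map fun l => (u l : M)).prod * x * (L.reverse.map fun l => ((u l)⁻¹ : Mˣ).val).prod := by
  induction L with
  | nil => simp
  | cons l L ih => simp [mul_smul, ih, units_smul_def, mul_assoc]

end ConjAct

variable {n : ℕ}

theorem mk_eq_mk_of_tbRel {a b : FreeMonoid (TBGen n)} (h : tbRel n a b) : mk n a = mk n b :=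
  (Con.eq _).2 (ConGen.Rel.of _ _ h)

theorem σB_eq_one_of_notMem_Icc {i : ℕ} (hi : i ∉ Set.Icc 1 (n - 1)) : σB n i = 1 :=
  (congrArg (mk n) (dif_neg hi)).trans (map_one _)

theorem σiB_eq_one_of_notMem_Icc {i : ℕ} (hi : i ∉ Set.Icc 1 (n - 1)) : σiB n i = 1 :=
  (congrArg (mk n) (dif_neg hi)).trans (map_one _)

theorem σB_mul_σiB (i : ℕ) : σB n i * σiB n i = 1 := by
  by_cases hi : i ∈ Set.Icc 1 (n - 1)
  · simpa only [σB, σiB, map_mul, map_one] using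
      mk_eq_mk_of_tbRel (tbRel.sig_inv i hi.1 hi.2)
  · rw [σB_eq_one_of_notMem_Icc hi, σiB_eq_one_of_notMem_Icc hi, one_mul]

theorem σiB_mul_σB (i : ℕ) : σiB n i * σB n i = 1 := by
  by_cases hi : i ∈ Set.Icc 1 (n - 1)
  · simpa only [σB, σiB, map_mul, map_one] using
      mk_eq_mk_of_tbRel (tbRel.inv_sig i hi.1 hi.2)
  · rw [σB_eq_one_of_notMem_Icc hi, σiB_eq_one_of_notMem_Icc hi, one_mul]

variable (n) in
/-- The generator `σᵢ` as a unit of `TBₙᴮ`, so that it can act by conjugation. Outside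
`1 ≤ i ≤ n - 1` it takes the junk value `1`, as `σB` and `σiB` do. -/
def σUnit (i : ℕ) : (TB n)ˣ where
  val := σB n i
  inv := σiB n i
  val_inv := σB_mul_σiB i
  inv_val := σiB_mul_σB i

variable (n) in
/-- The unit `σᵢ` (for `ε = true`) or `σᵢ⁻¹` (for `ε = false`): a choice `sᵢ ∈ {σᵢ, σᵢ⁻¹}`. -/
def signedσ (ε : Bool) (i : ℕ) : (TB n)ˣ :=
  if ε then σUnit n i else (σUnit n i)⁻¹

theorem coe_signedσ (ε : Bool) (i : ℕ) :
    (signedσ n ε i : TB n) = mk n (if ε then wσ n i else wσi n i) := by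
  cases ε <;> rfl

theorem coe_inv_signedσ (ε : Bool) (i : ℕ) :
    ((signedσ n ε i)⁻¹ : (TB n)ˣ).val = mk n (if ε then wσi n i else wσ n i) := by
  cases ε <;> rfl

theorem commute_σUnit {i j : ℕ} (hij : i + 1 < j) : Commute (σUnit n i) (σUnit n j) := by
  refine Commute.units_of_val (show Commute (σB n i) (σB n j) from ?_)
  by_cases hi : i ∈ Set.Icc 1 (n - 1)
  · by_cases hj : j ∈ Set.Icc 1 (n - 1)
    · simpa only [σB, commute_iff_eq, map_mul] using
        mk_eq_mk_of_tbRel (tbRel.sig_comm i j hi.1 hij hj.2)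
    · exact σB_eq_one_of_notMem_Icc hj ▸ Commute.one_right _
  · exact σB_eq_one_of_notMem_Icc hi ▸ Commute.one_left _

theorem commute_signedσ_σUnit (ε : Bool) {i j : ℕ} (hij : i + 1 < j) :
    Commute (signedσ n ε i) (σUnit n j) := by
  cases ε
  · exact (commute_σUnit hij).inv_left
  · exact commute_σUnit hij

theorem semiconjBy_σB_succ_mul_σB {i : ℕ} (hi : 1 ≤ i) (hin : i + 1 ≤ n - 1) :
    SemiconjBy (σB n (i + 1) * σB n i) (ηB n (i + 1)) (ηB n i) := by
  rw [SemiconjBy, ← mul_assoc]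
  simpa only [σB, ηB, map_mul] using (mk_eq_mk_of_tbRel
    (tbRel.eta_sig_sig i (i + 1) hi (by omega) (by omega) hin (Or.inl rfl))).symm

theorem semiconjBy_σB_mul_σiB_succ {i : ℕ} (hi : 1 ≤ i) (hin : i + 1 ≤ n - 1) :
    SemiconjBy (σB n i * σiB n (i + 1)) (ηB n i) (ηB n (i + 1)) := by
  rw [SemiconjBy, ← mul_assoc]
  simpa only [σB, σiB, ηB, map_mul] using (mk_eq_mk_of_tbRel
    (tbRel.eta_sig_sigInv (i + 1) i (by omega) hin hi (by omega) (Or.inr rfl))).symm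

theorem signedσ_smul_ηB_succ (ε : Bool) {i : ℕ} (hi : 1 ≤ i) (hin : i + 1 ≤ n - 1) :
    toConjAct (signedσ n ε i) • ηB n (i + 1) = (toConjAct (σUnit n (i + 1)))⁻¹ • ηB n i := by
  cases ε
  · have conj : toConjAct (σUnit n i * (σUnit n (i + 1))⁻¹) • ηB n i = ηB n (i + 1) :=
      toConjAct_smul_eq_iff_semiconjBy.2 (semiconjBy_σB_mul_σiB_succ hi hin)
    rw [toConjAct_mul, mul_smul, toConjAct_inv] at conj
    exact inv_smul_eq_iff.2 conj.symm
  · have conj : toConjAct (σUnit n (i + 1) * σUnit n i) • ηB n (i + 1) = ηB n i :=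
      toConjAct_smul_eq_iff_semiconjBy.2 (semiconjBy_σB_succ_mul_σB hi hin)
    rw [toConjAct_mul, mul_smul] at conj
    exact eq_inv_smul_iff.2 conj

theorem prod_signedσ_smul_ηB (s : ℕ → Bool) {i m : ℕ} (hi : 1 ≤ i) (him : i + m ≤ n - 1) :
    ((List.range' i m).map fun l => toConjAct (signedσ n (s l) l)).prod • ηB n (i + m) =
      ((List.range' (i + 1) m).reverse.map fun l => (toConjAct (σUnit n l))⁻¹).prod • ηB n i :=
  prod_map_range'_smul_of_commute
    (fun l _ hlj => ((commute_signedσ_σUnit (s l) hlj).map toConjAct).inv_right)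
    (fun l hil hlm => signedσ_smul_ηB_succ (s l) (by omega) (by omega))

theorem mk_signed_word_eq_prod_smul_ηB (s : ℕ → Bool) (L : List ℕ) (j : ℕ) :
    mk n ((L.map fun l => if s l then wσ n l else wσi n l).prod * wη n j *
        (L.reverse.map fun l => if s l then wσi n l else wσ n l).prod) =
      (L.map fun l => toConjAct (signedσ n (s l) l)).prod • ηB n j := by
  simp only [prod_map_toConjAct_smul, coe_signedσ, coe_inv_signedσ, map_mul, map_list_prod,
    List.map_map, Function.comp_def, ηB]

theorem ηg_eq_prod_smul_ηB {i k : ℕ} (hi : 1 ≤ i) (hik : i < k) :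
    ηg n i k =
      ((List.range' i (k - 1 - i)).map fun l => toConjAct (signedσ n true l)).prod •
        ηB n (k - 1) := by
  rw [← mk_signed_word_eq_prod_smul_ηB fun _ => true, ηg, wηg, if_neg hik.ne, min_eq_left hik.le,
    max_eq_right hik.le, wσRange, wσiRangeRev, show k - 2 + 1 - i = k - 1 - i by omega]
  rfl

end TiedBraidB

open TiedBraidB in
/-- In `TBₙᴮ`, for `1 ≤ i < k ≤ n` with `k - i > 1` and any choice
`s : ℕ → Bool` (where `s l = true` selects `σₗ` and `s l = false` selects `σₗ⁻¹`),
one has `η_{i,k} = sᵢ sᵢ₊₁ ⋯ s_{k-2} η_{k-1} s_{k-2}⁻¹ ⋯ sᵢ₊₁⁻¹ sᵢ⁻¹`;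
that is, all `2^(k-i-1)` such expressions equal the generalized tie `η_{i,k}`. -/
theorem generalizedTie_all_expressions (n i k : ℕ) (h1 : 1 ≤ i) (h2 : i < k) (h3 : k ≤ n)
    (h4 : 1 < k - i) (s : ℕ → Bool) :
    ηg n i k =
      mk n
        ((((List.range' i (k - 1 - i)).map fun l => if s l then wσ n l else wσi n l).prod *
            wη n (k - 1)) *
          (((List.range' i (k - 1 - i)).reverse.map
              fun l => if s l then wσi n l else wσ n l).prod)) := by
  have him : i + (k - 1 - i) = k - 1 := by omega
  have sign_free (t : ℕ → Bool) := prod_signedσ_smul_ηB (n := n) t h1 (him.trans_le (by omega))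
  rw [him] at sign_free
  rw [ηg_eq_prod_smul_ηB h1 h2, mk_signed_word_eq_prod_smul_ηB, sign_free s,
    sign_free fun _ => true]
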